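/- arXiv:2508.00770 — 4 statements merged into one kernel-verified Lean document; each statement's English description precedes it below -/
import Mathlib

section
/- Let 𝒳 and ℬ be standard Borel spaces, P a Borel probability measure on 𝒳, ℓ : ℬ → (0,∞) a Borel measurable function, and δ : 𝒳 × ℬ → [0,1] jointly Borel measurable. Then the function x ↦ sup_{b∈ℬ} ℓ(b)δ(x,b) is P-measurable (measurable with respect to the P-completion), and if ∫ sup_{b∈ℬ} ℓ(b)δ(x,b) dP(x) is finite, then ∫ sup_{b∈ℬ} ℓ(b)δ(x,b) dP(x) = sup_B ∫ ℓ(B(x))·δ(x,B(x)) dP(x), where the supremum on the right is over all Borel measurable maps B : 𝒳 → ℬ. -/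
open MeasureTheory
open scoped ENNReal

/-!
A nonempty Borel set `A ⊆ X × Y` is a continuous image of Baire space, so its projection is the
range of a continuous `f : (ℕ → ℕ) → X`. Let `A_l` be the image under `f` of the sequences extending
the finite word `l`, and choose a measurable hull `H_l` of `A_l` inside the closure of `A_l`. Since
`A_l = ⋃ k, A_{lk}`, the set `H_l \ ⋃ k, H_{lk}` is null. For `x` in `H_∅` outside these countably
many null sets, always taking the least available next letter gives a Borel choice of a branch `y`
with `x ∈ H_{y|n}` for all `n`, and such a branch satisfies `f y = x` by continuity. Thus `A` has a
Borel selection defined almost everywhere, which yields both the measurability of projections and,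
applied to `{(x, b) | g x ≤ F x b}` with `g` slightly below the supremum, the formula for the
integral.
-/

section SouslinScheme

variable {X α : Type*}

/-- The Souslin scheme of a map `f` on a space of sequences, such as Baire space: the images under
`f` of the basic clopen sets, whose hulls steer the choice of a preimage of a given point. As in
`PiNat.res`, words are read from right to left, so `k :: l` extends `l` by the letter `k`. -/
def imageScheme (f : (ℕ → α) → X) (l : List α) : Set X :=
  f '' {y | PiNat.res y l.length = l}

lemma imageScheme_nil (f : (ℕ → α) → X) : imageScheme f [] = Set.range f := by
  simp [imageScheme]

lemma imageScheme_res (f : (ℕ → α) → X) (y : ℕ → α) (n : ℕ) :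
    imageScheme f (PiNat.res y n) = f '' PiNat.cylinder y n := by
  rw [imageScheme, PiNat.res_length, PiNat.cylinder_eq_res]

lemma imageScheme_subset_iUnion_cons (f : (ℕ → α) → X) (l : List α) :
    imageScheme f l ⊆ ⋃ k, imageScheme f (k :: l) := by
  rintro _ ⟨y, hy, rfl⟩
  refine Set.mem_iUnion.2 ⟨y l.length, y, ?_, rfl⟩
  exact congrArg (y l.length :: ·) hy

lemma eq_of_forall_mem_closure_image_cylinder [TopologicalSpace X] [T2Space X] {E : ℕ → Type*}
    [∀ n, TopologicalSpace (E n)] [∀ n, DiscreteTopology (E n)] {f : (∀ n, E n) → X}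
    (hf : Continuous f) {x : X} {y : ∀ n, E n}
    (hx : ∀ n, x ∈ closure (f '' PiNat.cylinder y n)) : f y = x := by
  by_contra hne
  obtain ⟨V, U, hV, hU, hyV, hxU, hVU⟩ := t2_separation hne
  obtain ⟨_, ⟨z, n, rfl⟩, hyz, hzV⟩ :=
    (PiNat.isTopologicalBasis_cylinders E).exists_subset_of_mem_open hyV (hV.preimage hf)
  rw [← PiNat.mem_cylinder_iff_eq.1 hyz] at hzV
  obtain ⟨_, hwU, hw⟩ := mem_closure_iff.1 (hx n) U hU hxU
  exact hVU.notMem_of_mem_left (Set.image_subset_iff.2 hzV hw) hwU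

end SouslinScheme

section Selection

variable {X Y : Type*} [MeasurableSpace X]

lemma exists_measurable_nat_selection {A : Set X} {B : ℕ → Set X} (hA : MeasurableSet A)
    (hB : ∀ k, MeasurableSet (B k)) (hAB : A ⊆ ⋃ k, B k) :
    ∃ m : X → ℕ, Measurable m ∧ ∀ x ∈ A, x ∈ B (m x) := by
  classical
  have hex (x : X) : ∃ k, x ∈ A → x ∈ B k := by
    by_cases hx : x ∈ A
    · exact (Set.mem_iUnion.1 (hAB hx)).imp fun _ hk _ => hk
    · exact ⟨0, fun h => absurd h hx⟩
  exact ⟨fun x => Nat.find (hex x), measurable_find hex fun k => hA.imp (hB k),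
    fun x => Nat.find_spec (hex x)⟩

lemma exists_measurable_branch {A : List ℕ → Set X} (hA : ∀ l, MeasurableSet (A l))
    (hcover : ∀ l, A l ⊆ ⋃ k, A (k :: l)) :
    ∃ τ : X → ℕ → ℕ, Measurable τ ∧ ∀ x ∈ A [], ∀ n, x ∈ A (PiNat.res (τ x) n) := by
  choose m hm hmA using fun l =>
    exists_measurable_nat_selection (hA l) (fun k => hA (k :: l)) (hcover l)
  let _ : MeasurableSpace (List ℕ) := ⊤
  let word (x : X) (n : ℕ) : List ℕ := Nat.rec [] (fun _ l => m l x :: l) n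
  have measurable_next {w : X → List ℕ} (hw : Measurable w) : Measurable fun x => m (w x) x :=
    (measurable_from_prod_countable_right (f := fun p : List ℕ × X => m p.1 p.2) hm).comp
      (hw.prodMk measurable_id)
  have measurable_word (n : ℕ) : Measurable fun x => word x n := by
    induction n with
    | zero => exact measurable_const
    | succ n ih =>
      exact (Measurable.of_discrete (f := fun p : ℕ × List ℕ => p.1 :: p.2)).comp
        ((measurable_next ih).prodMk ih)
  have res_eq_word (x : X) (n : ℕ) : PiNat.res (fun i => m (word x i) x) n = word x n := by
    induction n with
    | zero => rfl
    | succ n ih => rw [PiNat.res_succ, ih]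
  refine ⟨fun x n => m (word x n) x,
    measurable_pi_lambda _ fun n => measurable_next (measurable_word n), fun x hx n => ?_⟩
  rw [res_eq_word]
  induction n with
  | zero => exact hx
  | succ n ih => exact hmA _ x ih

lemma measure_toMeasurable_sdiff_eq_zero (μ : Measure X) [SFinite μ] {s t : Set X} (hst : s ⊆ t)
    (ht : MeasurableSet t) : μ (toMeasurable μ s \ t) = 0 := by
  rw [Set.sdiff_eq, Measure.measure_toMeasurable_inter_of_sFinite ht.compl, ← Set.sdiff_eq,
    Set.sdiff_eq_empty.2 hst, measure_empty]

theorem exists_measurable_ae_section [TopologicalSpace X] [T2Space X] [OpensMeasurableSpace X]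
    (μ : Measure X) [SFinite μ] {f : (ℕ → ℕ) → X} (hf : Continuous f) :
    ∃ σ : X → ℕ → ℕ, Measurable σ ∧ ∀ᵐ x ∂μ, x ∈ Set.range f → f (σ x) = x := by
  let H (l : List ℕ) : Set X := toMeasurable μ (imageScheme f l) ∩ closure (imageScheme f l)
  have measurableSet_H (l : List ℕ) : MeasurableSet (H l) :=
    (measurableSet_toMeasurable _ _).inter isClosed_closure.measurableSet
  have subset_H (l : List ℕ) : imageScheme f l ⊆ H l :=
    Set.subset_inter (subset_toMeasurable _ _) subset_closure
  let N : Set X := ⋃ l, H l \ ⋃ k, H (k :: l)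
  have measurableSet_N : MeasurableSet N :=
    .iUnion fun l => (measurableSet_H l).diff (.iUnion fun k => measurableSet_H (k :: l))
  have measure_N : μ N = 0 := measure_iUnion_null fun l =>
    measure_mono_null (Set.sdiff_subset_sdiff_left Set.inter_subset_left) <|
      measure_toMeasurable_sdiff_eq_zero μ
        ((imageScheme_subset_iUnion_cons f l).trans (Set.iUnion_mono fun k => subset_H (k :: l)))
        (.iUnion fun k => measurableSet_H (k :: l))
  have cover (l : List ℕ) : H l \ N ⊆ ⋃ k, H (k :: l) \ N := by
    rintro x ⟨hxl, hxN⟩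
    rw [← Set.iUnion_sdiff]
    exact ⟨by_contra fun hx => hxN (Set.mem_iUnion.2 ⟨l, hxl, hx⟩), hxN⟩
  obtain ⟨σ, hσ, hσH⟩ :=
    exists_measurable_branch (fun l => (measurableSet_H l).diff measurableSet_N) cover
  refine ⟨σ, hσ, ?_⟩
  filter_upwards [measure_eq_zero_iff_ae_notMem.1 measure_N] with x hxN hxf
  refine eq_of_forall_mem_closure_image_cylinder hf fun n => ?_
  rw [← imageScheme_res]
  exact (hσH x ⟨subset_H [] (imageScheme_nil f ▸ hxf), hxN⟩ n).1.2

variable [StandardBorelSpace X] [MeasurableSpace Y] [StandardBorelSpace Y] [Nonempty Y]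
  (μ : Measure X) [SFinite μ]

theorem exists_measurable_ae_selection {A : Set (X × Y)} (hA : MeasurableSet A) :
    ∃ B : X → Y, Measurable B ∧ ∀ᵐ x ∂μ, x ∈ Prod.fst '' A → (x, B x) ∈ A := by
  let _ := upgradeStandardBorel X
  let _ := upgradeStandardBorel Y
  obtain rfl | ⟨g, hg, rfl⟩ : A = ∅ ∨ ∃ g : (ℕ → ℕ) → X × Y, Continuous g ∧ Set.range g = A := by
    simpa only [AnalyticSet] using hA.analyticSet
  · exact ⟨fun _ => Classical.arbitrary Y, measurable_const, by simp⟩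
  · obtain ⟨σ, hσ, hσg⟩ := exists_measurable_ae_section μ (continuous_fst.comp hg)
    refine ⟨fun x => (g (σ x)).2, (measurable_snd.comp hg.measurable).comp hσ, ?_⟩
    filter_upwards [hσg] with x hx hxA
    rw [← Set.range_comp] at hxA
    exact ⟨σ x, Prod.ext (hx hxA) rfl⟩

theorem nullMeasurableSet_image_fst {A : Set (X × Y)} (hA : MeasurableSet A) :
    NullMeasurableSet (Prod.fst '' A) μ := by
  obtain ⟨B, hB, hBA⟩ := exists_measurable_ae_selection μ hA
  have measurableSet_selected : MeasurableSet {x | (x, B x) ∈ A} := measurable_id.prodMk hB hA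
  refine measurableSet_selected.nullMeasurableSet.congr ?_
  filter_upwards [hBA] with x hx
  exact propext ⟨fun h => ⟨_, h, rfl⟩, hx⟩

theorem nullMeasurable_iSup_of_measurable_uncurry {F : X → Y → ℝ≥0∞}
    (hF : Measurable (Function.uncurry F)) : NullMeasurable (fun x => ⨆ y, F x y) μ := by
  suffices h : ∀ a, NullMeasurableSet ((fun x => ⨆ y, F x y) ⁻¹' Set.Ioi a) μ from
    measurable_of_Ioi (δ := NullMeasurableSpace X μ) h
  intro a
  have preimage_eq_image_fst :
      (fun x => ⨆ y, F x y) ⁻¹' Set.Ioi a = Prod.fst '' (Function.uncurry F ⁻¹' Set.Ioi a) := by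
    ext x
    simp [lt_iSup_iff]
  rw [preimage_eq_image_fst]
  exact nullMeasurableSet_image_fst μ (hF measurableSet_Ioi)

lemma exists_measurable_ae_le {F : X → Y → ℝ≥0∞} (hF : Measurable (Function.uncurry F))
    {g : X → ℝ≥0∞} (hg : Measurable g) (hgF : ∀ x, ∃ y, g x ≤ F x y) :
    ∃ B : X → Y, Measurable B ∧ ∀ᵐ x ∂μ, g x ≤ F x (B x) := by
  obtain ⟨B, hB, hgB⟩ :=
    exists_measurable_ae_selection μ (measurableSet_le (hg.comp measurable_fst) hF)
  refine ⟨B, hB, hgB.mono fun x hx => hx ?_⟩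
  obtain ⟨y, hy⟩ := hgF x
  exact ⟨(x, y), hy, rfl⟩

theorem lintegral_iSup_le_iSup_lintegral_comp {F : X → Y → ℝ≥0∞}
    (hF : Measurable (Function.uncurry F)) :
    ∫⁻ x, ⨆ y, F x y ∂μ ≤ ⨆ B : {B : X → Y // Measurable B}, ∫⁻ x, F x (B.1 x) ∂μ := by
  rw [lintegral_eq_nnreal]
  refine iSup₂_le fun φ hφ => ENNReal.le_of_forall_lt_one_mul_le fun r hr => ?_
  have exists_le (x : X) : ∃ y, r * φ x ≤ F x y := by
    obtain hx | hx := eq_or_ne (φ x) 0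
    · exact ⟨Classical.arbitrary Y, by simp [hx]⟩
    · have hlt : r * φ x < φ x := by
        simpa using ENNReal.mul_lt_mul_left (by simpa using hx) ENNReal.coe_ne_top hr
      exact (lt_iSup_iff.1 (hlt.trans_le (hφ x))).imp fun _ => le_of_lt
  have hφm : Measurable fun x => (φ x : ℝ≥0∞) := φ.measurable.coe_nnreal_ennreal
  obtain ⟨B, hB, hBF⟩ := exists_measurable_ae_le μ hF (hφm.const_mul r) exists_le
  calc r * (φ.map ((↑) : NNReal → ℝ≥0∞)).lintegral μ
      = ∫⁻ x, r * φ x ∂μ := by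
        rw [lintegral_const_mul r hφm, ← SimpleFunc.lintegral_eq_lintegral]
        rfl
    _ ≤ ∫⁻ x, F x (B x) ∂μ := lintegral_mono_ae hBF
    _ ≤ ⨆ B : {B : X → Y // Measurable B}, ∫⁻ x, F x (B.1 x) ∂μ :=
        le_iSup (fun B : {B : X → Y // Measurable B} => ∫⁻ x, F x (B.1 x) ∂μ) ⟨B, hB⟩

end Selection

theorem stmt0_general {X Y : Type*} [MeasurableSpace X] [StandardBorelSpace X]
    [MeasurableSpace Y] [StandardBorelSpace Y] [Nonempty Y] (μ : Measure X) [SFinite μ]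
    {F : X → Y → ℝ≥0∞} (hF : Measurable (Function.uncurry F)) :
    NullMeasurable (fun x => ⨆ y, F x y) μ ∧
      ∫⁻ x, ⨆ y, F x y ∂μ = ⨆ B : {B : X → Y // Measurable B}, ∫⁻ x, F x (B.1 x) ∂μ :=
  ⟨nullMeasurable_iSup_of_measurable_uncurry μ hF,
    (lintegral_iSup_le_iSup_lintegral_comp μ hF).antisymm
      (iSup_le fun B => lintegral_mono fun x => le_iSup (F x) (B.1 x))⟩

/-- for standard Borel spaces `𝒳`, `ℬ`, a Borel probability measure `P` on
`𝒳`, a measurable positive loss `ℓ : ℬ → (0,∞)`, and a jointly measurable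
`δ : 𝒳 × ℬ → [0,1]`, the function `x ↦ sup_{b∈ℬ} ℓ(b) δ(x,b)` is measurable with
respect to the `P`-completion, and if its integral is finite then it equals the
supremum, over all Borel measurable maps `B : 𝒳 → ℬ`, of
`∫ ℓ(B(x)) δ(x, B(x)) dP(x)`. -/
theorem stmt0 {𝒳 ℬ : Type*}
    [MeasurableSpace 𝒳] [StandardBorelSpace 𝒳]
    [MeasurableSpace ℬ] [StandardBorelSpace ℬ] [Nonempty ℬ]
    (P : Measure 𝒳) [IsProbabilityMeasure P]
    (ℓ : ℬ → ℝ) (hℓmeas : Measurable ℓ) (hℓpos : ∀ b, 0 < ℓ b)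
    (δ : 𝒳 × ℬ → ℝ) (hδmeas : Measurable δ)
    (hδ01 : ∀ p, δ p ∈ Set.Icc (0 : ℝ) 1) :
    NullMeasurable (fun x => ⨆ b, ENNReal.ofReal (ℓ b * δ (x, b))) P ∧
    ((∫⁻ x, (⨆ b, ENNReal.ofReal (ℓ b * δ (x, b))) ∂P) ≠ ∞ →
      (∫⁻ x, (⨆ b, ENNReal.ofReal (ℓ b * δ (x, b))) ∂P) =
        ⨆ B : {B : 𝒳 → ℬ // Measurable B},
          ∫⁻ x, ENNReal.ofReal (ℓ (B.1 x) * δ (x, B.1 x)) ∂P) := by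
  have hF : Measurable (Function.uncurry fun x b => ENNReal.ofReal (ℓ b * δ (x, b))) :=
    ((hℓmeas.comp measurable_snd).mul hδmeas).ennreal_ofReal
  exact (stmt0_general P hF).imp_right fun h _ => h
end

section
/- Let Γ be any set of adversaries containing all constant maps and let δ be a Γ-admissible test family. Then for all b₁, b₂ ∈ ℬ with b₁ ≤ b₂, δ(x,b₁) ≥ δ(x,b₂) for P-almost every x. The same holds for Γ-admissible binary test families. -/
open MeasureTheory
open scoped ENNReal

namespace PostHocTesting

variable {𝒳 : Type*} [MeasurableSpace 𝒳]

/-- The e-value associated to a test family `δ`: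
`E_δ(x) = sup_{b ∈ ℬ} ℓ(b) · δ(x,b)`, valued in `ℝ≥0∞`. -/
noncomputable def Esup (ℬ : Set ℝ) (ℓ : ℝ → ℝ) (δ : 𝒳 → ℝ → ℝ) (x : 𝒳) : ℝ≥0∞ :=
  ⨆ b : ℬ, ENNReal.ofReal (ℓ (b : ℝ) * δ x (b : ℝ))

/-- A (randomized) test family: jointly measurable, `[0,1]`-valued on scenarios,
with measurable associated e-value. -/
def IsTestFamily (ℬ : Set ℝ) (ℓ : ℝ → ℝ) (δ : 𝒳 → ℝ → ℝ) : Prop :=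
  Measurable (fun p : 𝒳 × ℝ => δ p.1 p.2) ∧
  (∀ x : 𝒳, ∀ b ∈ ℬ, δ x b ∈ Set.Icc (0 : ℝ) 1) ∧
  Measurable (Esup ℬ ℓ δ)

/-- A binary test family takes only the values 0 and 1. -/
def IsBinaryTestFamily (ℬ : Set ℝ) (ℓ : ℝ → ℝ) (δ : 𝒳 → ℝ → ℝ) : Prop :=
  IsTestFamily ℬ ℓ δ ∧ ∀ x : 𝒳, ∀ b ∈ ℬ, δ x b = 0 ∨ δ x b = 1

/-- Type-I risk `R_P(δ) = ∫ sup_{b∈ℬ} ℓ(b) δ(x,b) dP(x)`. -/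
noncomputable def typeIRisk (P : Measure 𝒳) (ℬ : Set ℝ) (ℓ : ℝ → ℝ)
    (δ : 𝒳 → ℝ → ℝ) : ℝ≥0∞ :=
  ∫⁻ x, Esup ℬ ℓ δ x ∂P

/-- `δ` is type-I risk safe if `R_P(δ) ≤ 1`. -/
def RiskSafe (P : Measure 𝒳) (ℬ : Set ℝ) (ℓ : ℝ → ℝ) (δ : 𝒳 → ℝ → ℝ) : Prop :=
  typeIRisk P ℬ ℓ δ ≤ 1

/-- Type-II risk of `δ` against the adversary `B`:
`∫ m(B(x)) (1 - δ(x, B(x))) dQ(x)`. -/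
noncomputable def typeIIRisk (Q : Measure 𝒳) (m : ℝ → ℝ) (δ : 𝒳 → ℝ → ℝ)
    (B : 𝒳 → ℝ) : ℝ≥0∞ :=
  ∫⁻ x, ENNReal.ofReal (m (B x) * (1 - δ x (B x))) ∂Q

/-- The set `𝐂` of constant adversaries. -/
def ConstAdv (𝒳 : Type*) (ℬ : Set ℝ) : Set (𝒳 → ℝ) :=
  {B | ∃ b ∈ ℬ, B = fun _ => b}

/-- The set `𝐔` of all measurable adversaries. -/
def AllAdv (𝒳 : Type*) [MeasurableSpace 𝒳] (ℬ : Set ℝ) : Set (𝒳 → ℝ) :=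
  {B | Measurable B ∧ ∀ x, B x ∈ ℬ}

/-- `φ` is strictly preferable to `δ` relative to the adversary class `Γ`. -/
def StrictlyPreferable (P Q : Measure 𝒳) (ℬ : Set ℝ) (ℓ m : ℝ → ℝ)
    (Γ : Set (𝒳 → ℝ)) (φ δ : 𝒳 → ℝ → ℝ) : Prop :=
  RiskSafe P ℬ ℓ φ ∧
  (∀ B ∈ Γ, typeIIRisk Q m φ B ≤ typeIIRisk Q m δ B) ∧
  (∃ B ∈ Γ, typeIIRisk Q m φ B < typeIIRisk Q m δ B)

/-- `Γ`-admissibility among randomized test families. -/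
def Admissible (P Q : Measure 𝒳) (ℬ : Set ℝ) (ℓ m : ℝ → ℝ)
    (Γ : Set (𝒳 → ℝ)) (δ : 𝒳 → ℝ → ℝ) : Prop :=
  RiskSafe P ℬ ℓ δ ∧
  ∀ φ : 𝒳 → ℝ → ℝ, IsTestFamily ℬ ℓ φ → ¬ StrictlyPreferable P Q ℬ ℓ m Γ φ δ

/-- `Γ`-admissibility among binary test families. -/
def AdmissibleBinary (P Q : Measure 𝒳) (ℬ : Set ℝ) (ℓ m : ℝ → ℝ)
    (Γ : Set (𝒳 → ℝ)) (δ : 𝒳 → ℝ → ℝ) : Prop :=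
  RiskSafe P ℬ ℓ δ ∧
  ∀ φ : 𝒳 → ℝ → ℝ, IsBinaryTestFamily ℬ ℓ φ → ¬ StrictlyPreferable P Q ℬ ℓ m Γ φ δ

/-- Likelihood ratio `Λ = dQ/dP`. -/
noncomputable def LR (P Q : Measure 𝒳) (x : 𝒳) : ℝ := (Q.rnDeriv P x).toReal

/-- `P` and `Q` are continuous: the distribution of `Λ` under `P` is atomless. -/
def AtomlessLR (P Q : Measure 𝒳) : Prop := ∀ c : ℝ, P {x | LR P Q x = c} = 0

/-!
If `ℓ b₁ ≤ ℓ b₂`, replace the value of `δ x` at `b₁` by `max (δ x b₁) (δ x b₂)`. This leaves the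
e-value unchanged, since the only new term `ℓ b₁ * δ x b₂` is already dominated by `ℓ b₂ * δ x b₂`,
and it increases no type-II risk. The type-II risk against the constant adversary `b₁` is finite,
and it drops strictly unless the replacement changes `δ` only on a null set, that is, unless
`δ x b₂ ≤ δ x b₁` almost everywhere. A maximum of `0`s and `1`s being `0` or `1`, the argument also
applies among binary test families.
-/

section RaiseAt

variable {ι α : Type*} [DecidableEq ι]

/-- The function obtained from `f` by raising its value at `i` to at least its value at `j`.
Applied to `δ x`, it yields the competitor against which the admissibility of a test family `δ` is
tested. -/
def raiseAt [Max α] (f : ι → α) (i j : ι) : ι → α :=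
  Function.update f i (max (f i) (f j))

lemma raiseAt_self [Max α] (f : ι → α) (i j : ι) : raiseAt f i j i = max (f i) (f j) :=
  Function.update_self ..

lemma raiseAt_of_ne [Max α] (f : ι → α) {i k : ι} (j : ι) (h : k ≠ i) :
    raiseAt f i j k = f k :=
  Function.update_of_ne h ..

lemma le_raiseAt [SemilatticeSup α] (f : ι → α) (i j : ι) : f ≤ raiseAt f i j :=
  le_update_self_iff.2 le_sup_left

lemma raiseAt_mem [LinearOrder α] {f : ι → α} {s : Set α} {j k : ι} (hj : f j ∈ s)
    (hk : f k ∈ s) (i : ι) : raiseAt f i j k ∈ s := by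
  obtain rfl | hki := eq_or_ne k i
  · rw [raiseAt_self]
    exact max_rec' (· ∈ s) hk hj
  · rwa [raiseAt_of_ne f j hki]

lemma mul_le_mul_raiseAt [Mul α] [Zero α] [SemilatticeSup α] [PosMulMono α] {w : ι → α}
    {i : ι} (hw : 0 ≤ w i) (f : ι → α) (j k : ι) : w k * f k ≤ w k * raiseAt f i j k := by
  obtain rfl | hki := eq_or_ne k i
  · exact mul_le_mul_of_nonneg_left (le_raiseAt f k j k) hw
  · rw [raiseAt_of_ne f j hki]

end RaiseAt

section EValue

variable {X : Type*} {ℬ : Set ℝ} {ℓ : ℝ → ℝ} {δ : X → ℝ → ℝ} {b b₁ b₂ : ℝ}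

lemma ofReal_mul_le_Esup (hb : b ∈ ℬ) (x : X) : ENNReal.ofReal (ℓ b * δ x b) ≤ Esup ℬ ℓ δ x :=
  le_iSup (fun b : ℬ => ENNReal.ofReal (ℓ b * δ x b)) ⟨b, hb⟩

lemma ofReal_mul_raiseAt_le_Esup {x : X} (hb : b ∈ ℬ) (hb₂ : b₂ ∈ ℬ) (hδ : 0 ≤ δ x b₂)
    (hℓ₁ : 0 ≤ ℓ b₁) (hℓ : ℓ b₁ ≤ ℓ b₂) :
    ENNReal.ofReal (ℓ b * raiseAt (δ x) b₁ b₂ b) ≤ Esup ℬ ℓ δ x := by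
  obtain rfl | hne := eq_or_ne b b₁
  · have hdom : ENNReal.ofReal (ℓ b * δ x b₂) ≤ ENNReal.ofReal (ℓ b₂ * δ x b₂) :=
      ENNReal.ofReal_le_ofReal (mul_le_mul_of_nonneg_right hℓ hδ)
    rw [raiseAt_self, mul_max_of_nonneg _ _ hℓ₁, ENNReal.ofReal_max]
    exact max_le (ofReal_mul_le_Esup hb x) (hdom.trans (ofReal_mul_le_Esup hb₂ x))
  · rw [raiseAt_of_ne _ _ hne]
    exact ofReal_mul_le_Esup hb x

lemma Esup_raiseAt (hb₂ : b₂ ∈ ℬ) (hδ : ∀ x, 0 ≤ δ x b₂) (hℓ₁ : 0 ≤ ℓ b₁) (hℓ : ℓ b₁ ≤ ℓ b₂) :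
    Esup ℬ ℓ (fun x => raiseAt (δ x) b₁ b₂) = Esup ℬ ℓ δ :=
  funext fun x => le_antisymm
    (iSup_le fun b => ofReal_mul_raiseAt_le_Esup b.2 hb₂ (hδ x) hℓ₁ hℓ)
    (iSup_mono fun b => ENNReal.ofReal_le_ofReal (mul_le_mul_raiseAt hℓ₁ (δ x) b₂ b))

end EValue

section TestFamily

variable {ℬ : Set ℝ} {ℓ : ℝ → ℝ} {δ : 𝒳 → ℝ → ℝ} {b₁ b₂ : ℝ}

lemma IsTestFamily.measurable_apply (hδ : IsTestFamily ℬ ℓ δ) (b : ℝ) :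
    Measurable fun x => δ x b :=
  hδ.1.comp measurable_prodMk_right

lemma IsTestFamily.mem_Icc (hδ : IsTestFamily ℬ ℓ δ) {b : ℝ} (hb : b ∈ ℬ) (x : 𝒳) :
    δ x b ∈ Set.Icc (0 : ℝ) 1 :=
  hδ.2.1 x b hb

lemma measurable_uncurry_raiseAt (hδ : Measurable fun p : 𝒳 × ℝ => δ p.1 p.2) (b₁ b₂ : ℝ) :
    Measurable fun p : 𝒳 × ℝ => raiseAt (δ p.1) b₁ b₂ p.2 := by
  have hsection (b : ℝ) : Measurable fun p : 𝒳 × ℝ => δ p.1 b :=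
    hδ.comp (measurable_fst.prodMk measurable_const)
  simp only [raiseAt, Function.update_apply]
  exact Measurable.ite (measurable_snd (measurableSet_singleton b₁))
    ((hsection b₁).max (hsection b₂)) hδ

protected lemma IsTestFamily.raiseAt (hδ : IsTestFamily ℬ ℓ δ) (hb₂ : b₂ ∈ ℬ)
    (hℓ₁ : 0 ≤ ℓ b₁) (hℓ : ℓ b₁ ≤ ℓ b₂) :
    IsTestFamily ℬ ℓ (fun x => raiseAt (δ x) b₁ b₂) := by
  refine ⟨measurable_uncurry_raiseAt hδ.1 b₁ b₂,
    fun x b hb => raiseAt_mem (hδ.mem_Icc hb₂ x) (hδ.mem_Icc hb x) b₁, ?_⟩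
  rw [Esup_raiseAt hb₂ (fun x => (hδ.mem_Icc hb₂ x).1) hℓ₁ hℓ]
  exact hδ.2.2

protected lemma IsBinaryTestFamily.raiseAt (hδ : IsBinaryTestFamily ℬ ℓ δ) (hb₂ : b₂ ∈ ℬ)
    (hℓ₁ : 0 ≤ ℓ b₁) (hℓ : ℓ b₁ ≤ ℓ b₂) :
    IsBinaryTestFamily ℬ ℓ (fun x => raiseAt (δ x) b₁ b₂) :=
  ⟨hδ.1.raiseAt hb₂ hℓ₁ hℓ,
    fun x b hb => raiseAt_mem (s := {0, 1}) (hδ.2 x b₂ hb₂) (hδ.2 x b hb) b₁⟩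

protected lemma RiskSafe.raiseAt {P : Measure 𝒳} (hs : RiskSafe P ℬ ℓ δ) (hb₂ : b₂ ∈ ℬ)
    (hδ : ∀ x, 0 ≤ δ x b₂) (hℓ₁ : 0 ≤ ℓ b₁) (hℓ : ℓ b₁ ≤ ℓ b₂) :
    RiskSafe P ℬ ℓ (fun x => raiseAt (δ x) b₁ b₂) := by
  rwa [RiskSafe, typeIRisk, Esup_raiseAt hb₂ hδ hℓ₁ hℓ]

end TestFamily

section TypeIIRisk

variable {Q : Measure 𝒳} {m : ℝ → ℝ} {δ φ : 𝒳 → ℝ → ℝ} {b b₁ : ℝ}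

lemma typeIIRisk_raiseAt_le (hm : 0 ≤ m b₁) (b₂ : ℝ) (B : 𝒳 → ℝ) :
    typeIIRisk Q m (fun x => raiseAt (δ x) b₁ b₂) B ≤ typeIIRisk Q m δ B := by
  refine lintegral_mono fun x => ENNReal.ofReal_le_ofReal ?_
  simpa only [mul_sub] using sub_le_sub_left (mul_le_mul_raiseAt hm (δ x) b₂ (B x)) _

lemma typeIIRisk_const_ne_top [IsFiniteMeasure Q] (hδ : ∀ x, 0 ≤ δ x b) (hm : 0 ≤ m b) :
    typeIIRisk Q m δ (fun _ => b) ≠ ∞ := by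
  have hbound (x : 𝒳) : m b * (1 - δ x b) ≤ m b :=
    mul_le_of_le_one_right hm (sub_le_self 1 (hδ x))
  exact ((lintegral_mono fun x => ENNReal.ofReal_le_ofReal (hbound x)).trans_lt
    (lintegral_const_lt_top ENNReal.ofReal_ne_top)).ne

lemma typeIIRisk_const_lt [IsFiniteMeasure Q] (hδ : Measurable fun x => δ x b)
    (hφ : ∀ x, φ x b ∈ Set.Icc (0 : ℝ) 1) (hm : 0 < m b) (hle : ∀ᵐ x ∂Q, δ x b ≤ φ x b)
    (hlt : ∃ᵐ x ∂Q, δ x b < φ x b) :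
    typeIIRisk Q m φ (fun _ => b) < typeIIRisk Q m δ (fun _ => b) := by
  have hmeas : Measurable fun x => ENNReal.ofReal (m b * (1 - δ x b)) :=
    ((hδ.const_sub 1).const_mul (m b)).ennreal_ofReal
  refine lintegral_strict_mono_of_ae_le_of_frequently_ae_lt hmeas.aemeasurable
    (typeIIRisk_const_ne_top (fun x => (hφ x).1) hm.le)
    (hle.mono fun x hx => ENNReal.ofReal_le_ofReal ?_) (hlt.mono fun x hx => ?_)
  · exact mul_le_mul_of_nonneg_left (sub_le_sub_left hx 1) hm.le
  · have hδ_lt_one : δ x b < 1 := hx.trans_le (hφ x).2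
    exact ((ENNReal.ofReal_lt_ofReal_iff (mul_pos hm (sub_pos.2 hδ_lt_one))).2
      (mul_lt_mul_of_pos_left (sub_lt_sub_left hx 1) hm)).ne

end TypeIIRisk

section Admissibility

variable {P Q : Measure 𝒳} [IsFiniteMeasure Q] {ℬ : Set ℝ} {ℓ m : ℝ → ℝ} {Γ : Set (𝒳 → ℝ)}
  {δ : 𝒳 → ℝ → ℝ}

lemma strictlyPreferable_raiseAt {b₁ b₂ : ℝ} (hδ : IsTestFamily ℬ ℓ δ) (hs : RiskSafe P ℬ ℓ δ)
    (hb₁ : b₁ ∈ ℬ) (hb₂ : b₂ ∈ ℬ) (hℓ₁ : 0 ≤ ℓ b₁) (hℓ : ℓ b₁ ≤ ℓ b₂) (hm : 0 < m b₁)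
    (hΓ : (fun _ => b₁) ∈ Γ) (hlt : ∃ᵐ x ∂Q, δ x b₁ < δ x b₂) :
    StrictlyPreferable P Q ℬ ℓ m Γ (fun x => raiseAt (δ x) b₁ b₂) δ := by
  have hraise : ∃ᵐ x ∂Q, δ x b₁ < raiseAt (δ x) b₁ b₂ b₁ := hlt.mono fun x hx => by
    rw [raiseAt_self]
    exact lt_max_of_lt_right hx
  exact ⟨hs.raiseAt hb₂ (fun x => (hδ.mem_Icc hb₂ x).1) hℓ₁ hℓ,
    fun B _ => typeIIRisk_raiseAt_le hm.le b₂ B, _, hΓ,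
    typeIIRisk_const_lt (hδ.measurable_apply b₁) ((hδ.raiseAt hb₂ hℓ₁ hℓ).mem_Icc hb₁) hm
      (.of_forall fun x => le_raiseAt (δ x) b₁ b₂ b₁) hraise⟩

lemma ae_le_of_not_strictlyPreferable_raiseAt {b₁ b₂ : ℝ} (hPQ : P ≪ Q)
    (hδ : IsTestFamily ℬ ℓ δ) (hs : RiskSafe P ℬ ℓ δ) (hb₁ : b₁ ∈ ℬ) (hb₂ : b₂ ∈ ℬ)
    (hℓ₁ : 0 ≤ ℓ b₁) (hℓ : ℓ b₁ ≤ ℓ b₂) (hm : 0 < m b₁) (hΓ : (fun _ => b₁) ∈ Γ)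
    (hnot : ¬ StrictlyPreferable P Q ℬ ℓ m Γ (fun x => raiseAt (δ x) b₁ b₂) δ) :
    ∀ᵐ x ∂P, δ x b₂ ≤ δ x b₁ := by
  suffices hQ : ∀ᵐ x ∂Q, δ x b₂ ≤ δ x b₁ from hPQ.ae_le hQ
  by_contra h
  have hlt : ∃ᵐ x ∂Q, δ x b₁ < δ x b₂ := by
    simpa only [Filter.not_eventually, not_le] using h
  exact hnot (strictlyPreferable_raiseAt hδ hs hb₁ hb₂ hℓ₁ hℓ hm hΓ hlt)

theorem stmt2_general (hPQ : P ≪ Q) (hℓ : ∀ b ∈ ℬ, 0 ≤ ℓ b) (hm : ∀ b ∈ ℬ, 0 < m b)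
    (hΓ : ConstAdv 𝒳 ℬ ⊆ Γ) (hδ : IsTestFamily ℬ ℓ δ) :
    (Admissible P Q ℬ ℓ m Γ δ →
      ∀ b₁ ∈ ℬ, ∀ b₂ ∈ ℬ, ℓ b₁ ≤ ℓ b₂ → ∀ᵐ x ∂P, δ x b₂ ≤ δ x b₁) ∧
    (IsBinaryTestFamily ℬ ℓ δ → AdmissibleBinary P Q ℬ ℓ m Γ δ →
      ∀ b₁ ∈ ℬ, ∀ b₂ ∈ ℬ, ℓ b₁ ≤ ℓ b₂ → ∀ᵐ x ∂P, δ x b₂ ≤ δ x b₁) := by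
  refine ⟨fun hA b₁ hb₁ b₂ hb₂ hle => ?_, fun hbin hA b₁ hb₁ b₂ hb₂ hle => ?_⟩
  · exact ae_le_of_not_strictlyPreferable_raiseAt hPQ hδ hA.1 hb₁ hb₂ (hℓ b₁ hb₁) hle (hm b₁ hb₁)
      (hΓ ⟨b₁, hb₁, rfl⟩) (hA.2 _ (hδ.raiseAt hb₂ (hℓ b₁ hb₁) hle))
  · exact ae_le_of_not_strictlyPreferable_raiseAt hPQ hδ hA.1 hb₁ hb₂ (hℓ b₁ hb₁) hle (hm b₁ hb₁)
      (hΓ ⟨b₁, hb₁, rfl⟩) (hA.2 _ (hbin.raiseAt hb₂ (hℓ b₁ hb₁) hle))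

end Admissibility

/-- any `Γ`-admissible (randomized or binary) test family is decreasing in the
scenario: for `b₁ ≤ b₂` in `ℬ`, `δ(x,b₁) ≥ δ(x,b₂)` for `P`-a.e. `x`. -/
theorem stmt2
    [StandardBorelSpace 𝒳]
    (P Q : Measure 𝒳) [IsProbabilityMeasure P] [IsProbabilityMeasure Q]
    (hPQ : P ≪ Q) (hQP : Q ≪ P)
    (ℬ : Set ℝ) (hℬne : ℬ.Nonempty)
    (ℓ : ℝ → ℝ) (hℓmeas : Measurable ℓ) (hℓpos : ∀ b ∈ ℬ, 0 < ℓ b)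
    (hℓmono : ∀ b₁ ∈ ℬ, ∀ b₂ ∈ ℬ, b₁ ≤ b₂ → ℓ b₁ ≤ ℓ b₂)
    (hℓgt1 : ∃ b ∈ ℬ, 1 < ℓ b)
    (m : ℝ → ℝ) (hm : ∀ b ∈ ℬ, 0 < m b)
    (Γ : Set (𝒳 → ℝ)) (hΓ : ConstAdv 𝒳 ℬ ⊆ Γ)
    (δ : 𝒳 → ℝ → ℝ) (hδ : IsTestFamily ℬ ℓ δ) :
    (Admissible P Q ℬ ℓ m Γ δ →
      ∀ b₁ ∈ ℬ, ∀ b₂ ∈ ℬ, b₁ ≤ b₂ → ∀ᵐ x ∂P, δ x b₂ ≤ δ x b₁) ∧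
    (IsBinaryTestFamily ℬ ℓ δ → AdmissibleBinary P Q ℬ ℓ m Γ δ →
      ∀ b₁ ∈ ℬ, ∀ b₂ ∈ ℬ, b₁ ≤ b₂ → ∀ᵐ x ∂P, δ x b₂ ≤ δ x b₁) := by
  have h := stmt2_general hPQ (fun b hb => (hℓpos b hb).le) hm hΓ hδ
  exact ⟨fun hA b₁ hb₁ b₂ hb₂ hle => h.1 hA b₁ hb₁ b₂ hb₂ (hℓmono b₁ hb₁ b₂ hb₂ hle),
    fun hbin hA b₁ hb₁ b₂ hb₂ hle => h.2 hbin hA b₁ hb₁ b₂ hb₂ (hℓmono b₁ hb₁ b₂ hb₂ hle)⟩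

end PostHocTesting
end

section
/- Let 𝒯 be a sub-σ-algebra of the Borel σ-field of 𝒳 such that the likelihood ratio Λ = dQ/dP is 𝒯-measurable. Let E be an e-variable for P and set S = E_P[E | 𝒯] (conditional expectation under P). Then S is an e-variable for P, and for every nonnegative concave function f : [0,∞) → ℝ such that f∘E and f∘S are Q-integrable, ∫ f(S) dQ ≥ ∫ f(E) dQ. In particular, ∫ log(S) dQ ≥ ∫ log(E) dQ whenever both integrals are defined. -/
open MeasureTheory
open scoped ENNReal

namespace PostHocTesting

variable {𝒳 : Type*} [MeasurableSpace 𝒳]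

/-!
Let `S = E_P[E | 𝒯]`. Concavity gives the supporting line inequality
`f(E) ≤ f(S) + g(S) (E - S)` wherever `S` lies in the interior of the domain of `f`. It also holds
elsewhere, because `S` can reach an endpoint of the domain only where `E = S`. After multiplication
by `Λ` the last term is `Λ g(S) (E - S)`, a `𝒯`-measurable function times one whose conditional
expectation is zero, and it contributes nothing to the integral under `P`. It may fail to be
integrable, so pulling out `Λ g(S)` takes the form of an inequality for integrable minorants.
-/

section SupportingLines

variable {s : Set ℝ} {f : ℝ → ℝ}

lemma rightDeriv_mul_sub_le_sub {x y : ℝ} (hf : ConvexOn ℝ s f) (hx : x ∈ interior s)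
    (hy : y ∈ s) : derivWithin f (Set.Ioi x) x * (y - x) ≤ f y - f x := by
  rcases lt_trichotomy y x with hyx | rfl | hxy
  · have h := (hf.slope_le_leftDeriv_of_mem_interior hy hx hyx).trans
      (hf.leftDeriv_le_rightDeriv_of_mem_interior hx)
    rw [slope_def_field, div_le_iff₀ (sub_pos.2 hyx)] at h
    linarith
  · simp only [sub_self, mul_zero, le_refl]
  · have h := hf.rightDeriv_le_slope_of_mem_interior hx hy hxy
    rwa [slope_def_field, le_div_iff₀ (sub_pos.2 hxy)] at h

lemma exists_measurable_supergradient (hf : ConcaveOn ℝ s f) :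
    ∃ g : ℝ → ℝ, Measurable g ∧
      ∀ x ∈ interior s, ∀ y ∈ s, f y - f x ≤ g x * (y - x) := by
  refine ⟨fun x => -derivWithin (-f) (Set.Ioi x) x, (measurable_derivWithin_Ioi _).neg,
    fun x hx y hy => ?_⟩
  have h := rightDeriv_mul_sub_le_sub hf.neg hx hy
  simp only [Pi.neg_apply] at h
  linarith

lemma mem_lowerBounds_or_mem_upperBounds_of_notMem_interior {z : ℝ} (hs : Convex ℝ s)
    (hz : z ∉ interior s) : z ∈ lowerBounds s ∨ z ∈ upperBounds s := by
  by_contra! h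
  simp only [mem_lowerBounds, mem_upperBounds, not_forall, not_le] at h
  obtain ⟨⟨a, ha, haz⟩, b, hb, hzb⟩ := h
  exact hz (mem_interior.2 ⟨Set.Ioo a b, Set.Ioo_subset_Icc_self.trans (hs.ordConnected.out ha hb),
    isOpen_Ioo, haz, hzb⟩)

end SupportingLines

section CondExp

variable {Ω : Type*} {m mΩ : MeasurableSpace Ω} {μ : Measure Ω} {X : Ω → ℝ}

lemma ae_eq_condExp_of_condExp_le_on (hm : m ≤ mΩ) [SigmaFinite (μ.trim hm)]
    (hX : Integrable X μ) {A : Set Ω} (hA : MeasurableSet[m] A)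
    (hle : ∀ᵐ x ∂μ, x ∈ A → (μ[X | m]) x ≤ X x) : ∀ᵐ x ∂μ, x ∈ A → X x = (μ[X | m]) x := by
  have h_nonneg : 0 ≤ᵐ[μ.restrict A] X - μ[X | m] :=
    (ae_restrict_iff' (hm A hA)).2 (hle.mono fun x hx hxA => sub_nonneg.2 (hx hxA))
  have h_integral : ∫ x in A, (X - μ[X | m]) x ∂μ = 0 := by
    simp only [Pi.sub_apply]
    rw [integral_sub hX.integrableOn integrable_condExp.integrableOn,
      setIntegral_condExp hm hX hA, sub_self]
  have h_zero := (setIntegral_eq_zero_iff_of_nonneg_ae h_nonneg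
    (hX.sub integrable_condExp).integrableOn).1 h_integral
  exact ((ae_restrict_iff' (hm A hA)).1 h_zero).mono fun x hx hxA => sub_eq_zero.1 (hx hxA)

lemma ae_eq_condExp_of_le_condExp_on (hm : m ≤ mΩ) [SigmaFinite (μ.trim hm)]
    (hX : Integrable X μ) {A : Set Ω} (hA : MeasurableSet[m] A)
    (hle : ∀ᵐ x ∂μ, x ∈ A → X x ≤ (μ[X | m]) x) : ∀ᵐ x ∂μ, x ∈ A → X x = (μ[X | m]) x := by
  have h_neg := condExp_neg (μ := μ) X m
  have h := ae_eq_condExp_of_condExp_le_on hm hX.neg hA <| by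
    filter_upwards [hle, h_neg] with x hx hxn hxA
    rw [hxn]
    exact neg_le_neg (hx hxA)
  filter_upwards [h, h_neg] with x hx hxn hxA
  exact neg_injective ((hx hxA).trans hxn)

lemma condExp_mem_interior_or_eq {s : Set ℝ} (hm : m ≤ mΩ) [SigmaFinite (μ.trim hm)]
    (hX : Integrable X μ) (hs : Convex ℝ s) (hXs : ∀ᵐ x ∂μ, X x ∈ s) :
    ∀ᵐ x ∂μ, (μ[X | m]) x ∈ interior s ∨ X x = (μ[X | m]) x := by
  have hS : Measurable[m] (μ[X | m]) := stronglyMeasurable_condExp.measurable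
  have h_isLower : IsLowerSet (lowerBounds s) := lowerBounds_mono_mem
  have h_isUpper : IsUpperSet (upperBounds s) := upperBounds_mono_mem
  have h_lower := ae_eq_condExp_of_condExp_le_on hm hX (hS h_isLower.ordConnected.measurableSet)
    (hXs.mono fun x hx hxA => hxA hx)
  have h_upper := ae_eq_condExp_of_le_condExp_on hm hX (hS h_isUpper.ordConnected.measurableSet)
    (hXs.mono fun x hx hxA => hxA hx)
  filter_upwards [h_lower, h_upper] with x hl hu
  refine or_iff_not_imp_left.2 fun hx => ?_
  exact (mem_lowerBounds_or_mem_upperBounds_of_notMem_interior hs hx).elim hl hu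

lemma condExp_le_mul_condExp (hm : m ≤ mΩ) {Y h : Ω → ℝ} (hX : Integrable X μ)
    (hY : Integrable Y μ) (hh : StronglyMeasurable[m] h) (hle : Y ≤ᵐ[μ] h * X) :
    μ[Y | m] ≤ᵐ[μ] h * μ[X | m] := by
  -- `h * X` need not be integrable; dividing by `1 + |h|` makes both multipliers bounded.
  set c : Ω → ℝ := fun x => (1 + |h x|)⁻¹
  have hc_pos (x : Ω) : 0 < c x := by positivity
  have hc_le (x : Ω) : ‖c x‖ ≤ 1 := by
    rw [Real.norm_of_nonneg (hc_pos x).le]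
    exact inv_le_one_of_one_le₀ (le_add_of_nonneg_right (abs_nonneg _))
  have hch_le (x : Ω) : ‖(c * h) x‖ ≤ 1 := by
    rw [Pi.mul_apply, norm_mul, Real.norm_of_nonneg (hc_pos x).le, Real.norm_eq_abs,
      inv_mul_le_one₀ (by positivity)]
    exact le_add_of_nonneg_left zero_le_one
  have hc_meas : StronglyMeasurable[m] c := by
    have hh_meas : Measurable[m] h := hh.measurable
    exact Measurable.stronglyMeasurable (by fun_prop)
  have hch_meas : StronglyMeasurable[m] (c * h) := hc_meas.mul hh
  have hcY : Integrable (c * Y) μ :=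
    hY.bdd_mul (hc_meas.mono hm).aestronglyMeasurable (ae_of_all _ hc_le)
  have hchX : Integrable (c * h * X) μ :=
    hX.bdd_mul (hch_meas.mono hm).aestronglyMeasurable (ae_of_all _ hch_le)
  have h_mono : μ[c * Y | m] ≤ᵐ[μ] μ[c * h * X | m] := condExp_mono hcY hchX <| by
    filter_upwards [hle] with x hx
    rw [mul_assoc]
    exact mul_le_mul_of_nonneg_left hx (hc_pos x).le
  filter_upwards [h_mono, condExp_mul_of_stronglyMeasurable_left hc_meas hcY hY,
    condExp_mul_of_stronglyMeasurable_left hch_meas hchX hX] with x hx hxY hxX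
  rw [hxY, hxX, mul_assoc] at hx
  exact le_of_mul_le_mul_left hx (hc_pos x)

lemma integral_nonpos_of_le_mul_sub_condExp (hm : m ≤ mΩ) [SigmaFinite (μ.trim hm)]
    {Y h : Ω → ℝ} (hX : Integrable X μ) (hY : Integrable Y μ) (hh : StronglyMeasurable[m] h)
    (hle : Y ≤ᵐ[μ] h * (X - μ[X | m])) : ∫ x, Y x ∂μ ≤ 0 := by
  have h_centered : μ[X - μ[X | m] | m] =ᵐ[μ] 0 := by
    filter_upwards [condExp_sub hX integrable_condExp m,
      condExp_condExp_of_le (μ := μ) (f := X) le_rfl hm] with x hx hxx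
    rw [hx, Pi.sub_apply, hxx, sub_self, Pi.zero_apply]
  rw [← integral_condExp hm]
  refine integral_nonpos_of_ae ?_
  filter_upwards [condExp_le_mul_condExp hm (hX.sub integrable_condExp) hY hh hle,
    h_centered] with x hx hx0
  simpa only [Pi.mul_apply, hx0, Pi.zero_apply, mul_zero] using hx

lemma lintegral_ofReal_condExp (hm : m ≤ mΩ) [SigmaFinite (μ.trim hm)] (hX : Integrable X μ)
    (hX0 : 0 ≤ᵐ[μ] X) :
    ∫⁻ x, ENNReal.ofReal ((μ[X | m]) x) ∂μ = ∫⁻ x, ENNReal.ofReal (X x) ∂μ := by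
  rw [← ofReal_integral_eq_lintegral_ofReal integrable_condExp (condExp_nonneg hX0),
    integral_condExp hm, ofReal_integral_eq_lintegral_ofReal hX hX0]

end CondExp

lemma integral_comp_le_integral_comp_condExp {Ω : Type*} {m mΩ : MeasurableSpace Ω}
    {P Q : Measure Ω} {X : Ω → ℝ} {s : Set ℝ} {f : ℝ → ℝ} (hm : m ≤ mΩ)
    [SigmaFinite (P.trim hm)] [SigmaFinite Q] (hQP : Q ≪ P) (hΛ : Measurable[m] (LR P Q))
    (hf : ConcaveOn ℝ s f) (hX : Integrable X P) (hXs : ∀ᵐ x ∂P, X x ∈ s)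
    (hfX : Integrable (fun x => f (X x)) Q) (hfS : Integrable (fun x => f ((P[X | m]) x)) Q) :
    ∫ x, f (X x) ∂Q ≤ ∫ x, f ((P[X | m]) x) ∂Q := by
  have : SigmaFinite P := .of_trim hm
  obtain ⟨g, hg, hfg⟩ := exists_measurable_supergradient hf
  have h_tangent : ∀ᵐ x ∂P,
      f (X x) - f ((P[X | m]) x) ≤ g ((P[X | m]) x) * (X x - (P[X | m]) x) := by
    filter_upwards [hXs, condExp_mem_interior_or_eq hm hX hf.1 hXs] with x hxs hx
    rcases hx with h_int | h_eq
    · exact hfg _ h_int _ hxs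
    · rw [h_eq, sub_self, sub_self, mul_zero]
  have h_weight : StronglyMeasurable[m] (LR P Q * fun x => g ((P[X | m]) x)) :=
    (hΛ.mul (hg.comp stronglyMeasurable_condExp.measurable)).stronglyMeasurable
  rw [← sub_nonpos, ← integral_sub hfX hfS, ← integral_toReal_rnDeriv_mul hQP]
  refine integral_nonpos_of_le_mul_sub_condExp hm hX
    ((integrable_toReal_rnDeriv_mul_iff hQP).2 (hfX.sub hfS)) h_weight ?_
  filter_upwards [h_tangent] with x hx
  simp only [Pi.mul_apply, Pi.sub_apply, mul_assoc]
  exact mul_le_mul_of_nonneg_left hx ENNReal.toReal_nonneg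

theorem stmt11_general {Ω : Type*} (𝒯 : MeasurableSpace Ω) [mΩ : MeasurableSpace Ω]
    (P Q : Measure Ω) (h𝒯 : 𝒯 ≤ mΩ) [SigmaFinite (P.trim h𝒯)] [SigmaFinite Q]
    (hQP : Q ≪ P) (hΛ : Measurable[𝒯] (LR P Q))
    (E : Ω → ℝ) (hE : AEMeasurable E P) (hE0 : 0 ≤ᵐ[P] E)
    (hEev : ∫⁻ x, ENNReal.ofReal (E x) ∂P ≤ 1) :
    (0 ≤ᵐ[P] (P[E | 𝒯])) ∧
    (∫⁻ x, ENNReal.ofReal ((P[E | 𝒯]) x) ∂P ≤ 1) ∧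
    (∀ (s : Set ℝ) (f : ℝ → ℝ), ConcaveOn ℝ s f → (∀ᵐ x ∂P, E x ∈ s) →
      Integrable (fun x => f (E x)) Q → Integrable (fun x => f ((P[E | 𝒯]) x)) Q →
      ∫ x, f (E x) ∂Q ≤ ∫ x, f ((P[E | 𝒯]) x) ∂Q) := by
  have hE_int : Integrable E P :=
    (lintegral_ofReal_ne_top_iff_integrable hE.aestronglyMeasurable hE0).1
      (hEev.trans_lt ENNReal.one_lt_top).ne
  exact ⟨condExp_nonneg hE0, (lintegral_ofReal_condExp h𝒯 hE_int hE0).trans_le hEev,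
    fun s f hf hEs => integral_comp_le_integral_comp_condExp h𝒯 hQP hΛ hf hE_int hEs⟩

/-- for a sub-σ-algebra `𝒯` making the likelihood ratio measurable and an
e-variable `E` for `P`, `S = E_P[E | 𝒯]` is an e-variable for `P` and
`∫ f(S) dQ ≥ ∫ f(E) dQ` for every nonnegative concave `f` (with both integrals
defined); in particular for `f = log`. -/
theorem stmt11 {Ω : Type*} (𝒯 : MeasurableSpace Ω)
    [mΩ : MeasurableSpace Ω] [StandardBorelSpace Ω]
    (P Q : Measure Ω) [IsProbabilityMeasure P] [IsProbabilityMeasure Q]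
    (hPQ : P ≪ Q) (hQP : Q ≪ P)
    (h𝒯 : 𝒯 ≤ mΩ)
    (hΛ : Measurable[𝒯] (LR P Q))
    (E : Ω → ℝ) (hEmeas : Measurable E) (hEnn : ∀ x, 0 ≤ E x)
    (hEev : ∫⁻ x, ENNReal.ofReal (E x) ∂P ≤ 1) :
    (0 ≤ᵐ[P] (P[E|𝒯])) ∧
    (∫⁻ x, ENNReal.ofReal ((P[E|𝒯]) x) ∂P ≤ 1) ∧
    (∀ f : ℝ → ℝ, ConcaveOn ℝ (Set.Ici 0) f → (∀ y ∈ Set.Ici (0 : ℝ), 0 ≤ f y) →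
      Integrable (fun x => f (E x)) Q → Integrable (fun x => f ((P[E|𝒯]) x)) Q →
      ∫ x, f (E x) ∂Q ≤ ∫ x, f ((P[E|𝒯]) x) ∂Q) ∧
    ((∀ᵐ x ∂P, 0 < E x) →
      Integrable (fun x => Real.log (E x)) Q →
      Integrable (fun x => Real.log ((P[E|𝒯]) x)) Q →
      ∫ x, Real.log (E x) ∂Q ≤ ∫ x, Real.log ((P[E|𝒯]) x) ∂Q) := by
  obtain ⟨h_nonneg, h_le_one, h_jensen⟩ :=
    stmt11_general 𝒯 P Q h𝒯 hQP hΛ E hEmeas.aemeasurable (ae_of_all P hEnn) hEev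
  exact ⟨h_nonneg, h_le_one, fun f hf _ => h_jensen _ f hf (ae_of_all P hEnn),
    h_jensen _ _ strictConcaveOn_log_Ioi.concaveOn⟩

end PostHocTesting
end

section
/- Assume P and Q are continuous (the distribution of Λ under P is atomless). If a binary test family φ is 𝐂-admissible among binary test families, then E_φ is an increasing function of the likelihood ratio P-almost surely: there exists a P-null set N ⊆ 𝒳 such that for all x, y ∉ N, Λ(x) ≤ Λ(y) implies E_φ(x) ≤ E_φ(y). Consequently, for each fixed b ∈ ℬ, φ(·,b) is an increasing function of Λ P-almost surely. -/
open MeasureTheory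
open scoped ENNReal

namespace PostHocTesting

variable {𝒳 : Type*} [MeasurableSpace 𝒳]

/-!
Replace `φ`, in each scenario `b`, by the Neyman–Pearson test whose size is the `P`-probability that
the e-value of `φ` reaches `ℓ b`. The tails of the new e-value under `P` do not exceed those of the
old one, so the new family is still safe; and as `φ` rejects in scenario `b` only where its e-value
reaches `ℓ b`, the Neyman–Pearson lemma makes the new family at least as powerful in every scenario.
By admissibility the two are equally powerful, and since the likelihood ratio has no atoms the most
powerful test is unique: `{E_φ ≥ ℓ b}` and `{φ(·, b) = 1}` are both, up to null sets, the same upper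
set of the likelihood ratio. Countably many losses approximate all others from below, which leaves
a single exceptional null set.
-/

section UpperTail

variable {α : Type*}

section Preorder

variable [Preorder α] [MeasurableSpace α]

/-- The upper tail of mass `g` of a law `μ`: the points beyond which `μ` has mass at most `g`. For
an atomless law of total mass at least `g` its mass is exactly `g`, see `measure_upperTail`. -/
def upperTail (μ : Measure α) (g : ℝ≥0∞) : Set α :=
  {c | μ (Set.Ioi c) ≤ g}

lemma isUpperSet_upperTail (μ : Measure α) (g : ℝ≥0∞) : IsUpperSet (upperTail μ g) :=
  fun _ _ hab ha ↦ (measure_mono (Set.Ioi_subset_Ioi hab)).trans ha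

lemma upperTail_mono (μ : Measure α) : Monotone (upperTail μ) :=
  fun _ _ hg _ hc ↦ hc.trans hg

end Preorder

variable [LinearOrder α] [TopologicalSpace α] [MeasurableSpace α]
  {μ : Measure α} {s : Set α} {g : ℝ≥0∞}

lemma measure_le_of_forall_measure_Ici_le [ClosedIicTopology α] [μ.InnerRegularCompactLTTop]
    (hs : MeasurableSet s) (hμs : μ s ≠ ∞) (h : ∀ c ∈ s, μ (Set.Ici c) ≤ g) : μ s ≤ g := by
  rw [hs.measure_eq_iSup_isCompact_of_ne_top hμs]
  refine iSup₂_le fun K hKs ↦ iSup_le fun hK ↦ ?_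
  rcases K.eq_empty_or_nonempty with rfl | hne
  · simp
  · obtain ⟨c, hcK, hc⟩ := hK.exists_isLeast hne
    exact (measure_mono hc).trans (h c (hKs hcK))

lemma measure_le_of_forall_measure_Iic_le [ClosedIciTopology α] [μ.InnerRegularCompactLTTop]
    (hs : MeasurableSet s) (hμs : μ s ≠ ∞) (h : ∀ c ∈ s, μ (Set.Iic c) ≤ g) : μ s ≤ g :=
  have : Measure.InnerRegularCompactLTTop (α := αᵒᵈ) μ := ‹μ.InnerRegularCompactLTTop›
  measure_le_of_forall_measure_Ici_le (α := αᵒᵈ) hs hμs h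

lemma measurable_measure_Ioi [OrderTopology α] [SecondCountableTopology α] [BorelSpace α]
    (μ : Measure α) : Measurable fun c ↦ μ (Set.Ioi c) :=
  Antitone.measurable fun _ _ hab ↦ measure_mono (Set.Ioi_subset_Ioi hab)

lemma measure_upperTail [OrderTopology α] [SecondCountableTopology α] [BorelSpace α]
    [IsFiniteMeasure μ] [NullSingletonClass μ] [μ.InnerRegularCompactLTTop]
    (hg : g ≤ μ Set.univ) : μ (upperTail μ g) = g := by
  have hmeas : MeasurableSet (upperTail μ g) :=
    measurableSet_le (measurable_measure_Ioi μ) measurable_const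
  apply le_antisymm
  · refine measure_le_of_forall_measure_Ici_le hmeas (measure_ne_top _ _) fun c hc ↦ ?_
    rwa [← measure_congr (Ioi_ae_eq_Ici (μ := μ) (a := c))]
  · have hcompl : μ (upperTail μ g)ᶜ ≤ μ Set.univ - g := by
      refine measure_le_of_forall_measure_Iic_le hmeas.compl (measure_ne_top _ _) fun c hc ↦ ?_
      rw [← Set.compl_Ioi, measure_compl measurableSet_Ioi (measure_ne_top _ _)]
      have hgc : g < μ (Set.Ioi c) := not_le.1 hc
      exact tsub_le_tsub_left hgc.le _
    rw [measure_compl hmeas (measure_ne_top _ _)] at hcompl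
    exact (ENNReal.sub_le_sub_iff_left hg (measure_ne_top _ _)).1 hcompl

end UpperTail

section StochasticOrder

variable {μ : Measure 𝒳} {f g : 𝒳 → ℝ≥0∞}

lemma volume_Ioi_inter_ofReal_lt (a : ℝ≥0∞) :
    volume (Set.Ioi (0 : ℝ) ∩ {t | ENNReal.ofReal t < a}) = a := by
  induction a with
  | top => simp
  | coe r =>
    have : Set.Ioi (0 : ℝ) ∩ {t | ENNReal.ofReal t < r} = Set.Ioo 0 (r : ℝ) := by
      ext t
      simp +contextual [ENNReal.ofReal_lt_coe_iff, le_of_lt]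
    simp [this]

lemma lintegral_eq_lintegral_measure_ofReal_lt [SFinite μ] (hf : Measurable f) :
    ∫⁻ x, f x ∂μ = ∫⁻ t in Set.Ioi (0 : ℝ), μ {x | ENNReal.ofReal t < f x} := by
  have hmeas : MeasurableSet {p : 𝒳 × ℝ | ENNReal.ofReal p.2 < f p.1} :=
    measurableSet_lt (by fun_prop) (by fun_prop)
  calc ∫⁻ x, f x ∂μ
      = ∫⁻ x, volume.restrict (Set.Ioi 0) {t | ENNReal.ofReal t < f x} ∂μ := by
        refine lintegral_congr fun x ↦ ?_
        rw [Measure.restrict_apply' measurableSet_Ioi, Set.inter_comm, volume_Ioi_inter_ofReal_lt]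
    _ = μ.prod (volume.restrict (Set.Ioi 0)) {p | ENNReal.ofReal p.2 < f p.1} :=
        (Measure.prod_apply hmeas).symm
    _ = ∫⁻ t in Set.Ioi (0 : ℝ), μ {x | ENNReal.ofReal t < f x} :=
        Measure.prod_apply_symm hmeas

lemma lintegral_le_of_forall_measure_lt_le [SFinite μ] (hf : Measurable f) (hg : Measurable g)
    (h : ∀ t, μ {x | t < f x} ≤ μ {x | t < g x}) : ∫⁻ x, f x ∂μ ≤ ∫⁻ x, g x ∂μ := by
  rw [lintegral_eq_lintegral_measure_ofReal_lt hf, lintegral_eq_lintegral_measure_ofReal_lt hg]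
  exact lintegral_mono fun t ↦ h _

end StochasticOrder

section AEMonotone

variable {β γ : Type*}

/-- `f` is almost surely an increasing function of the statistic `Λ`: outside a single `P`-null set,
a larger value of `Λ` forces a larger value of `f`. -/
def AEMonotoneAlong [LE β] [LE γ] (P : Measure 𝒳) (Λ : 𝒳 → β) (f : 𝒳 → γ) : Prop :=
  ∃ N : Set 𝒳, P N = 0 ∧ ∀ x ∉ N, ∀ y ∉ N, Λ x ≤ Λ y → f x ≤ f y

lemma aemonotoneAlong_of_countable [LE β] [LinearOrder γ] {P : Measure 𝒳} {Λ : 𝒳 → β} {f : 𝒳 → γ}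
    {A : Set γ} (hA : A.Countable) (hsep : ∀ x y, f y < f x → ∃ a ∈ A, f y < a ∧ a ≤ f x)
    (hup : ∀ a ∈ A, ∃ K, IsUpperSet K ∧ {x | a ≤ f x} =ᵐ[P] Λ ⁻¹' K) :
    AEMonotoneAlong P Λ f := by
  choose! K hK hfK using hup
  have hall : ∀ᵐ x ∂P, ∀ a ∈ A, a ≤ f x ↔ Λ x ∈ K a :=
    (ae_ball_iff hA).2 fun a ha ↦ Filter.eventuallyEq_set.1 (hfK a ha)
  refine ⟨_, ae_iff.1 hall, fun x hx y hy hxy ↦ ?_⟩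
  rw [Set.mem_ofPred_eq, not_not] at hx hy
  by_contra! hlt
  obtain ⟨a, ha, hya, hax⟩ := hsep x y hlt
  exact hya.not_ge ((hy a ha).2 (hK a ha hxy ((hx a ha).1 hax)))

open scoped Topology in
lemma exists_countable_subset_forall_lt_exists_mem_Ioc [LinearOrder γ] [TopologicalSpace γ]
    [OrderTopology γ] [SecondCountableTopology γ] (A : Set γ) :
    ∃ D ⊆ A, D.Countable ∧ ∀ a ∈ A, ∀ t < a, ∃ d ∈ D, t < d ∧ d ≤ a := by
  obtain ⟨D, hD, hDdense⟩ := TopologicalSpace.exists_countable_dense A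
  refine ⟨(↑) '' D ∪ {a ∈ A | 𝓝[A ∩ Set.Iio a] a = ⊥},
    Set.union_subset (Subtype.coe_image_subset A D) fun _ ha ↦ ha.1,
    (hD.image _).union countable_setOfPred_isolated_left_within, fun a ha t hta ↦ ?_⟩
  by_cases hiso : 𝓝[A ∩ Set.Iio a] a = ⊥
  · exact ⟨a, Or.inr ⟨ha, hiso⟩, hta, le_rfl⟩
  · have hne : (𝓝[A ∩ Set.Iio a] a).NeBot := ⟨hiso⟩
    obtain ⟨s, hts, hsA, hsa⟩ := hne.nonempty_of_mem
      (Filter.inter_mem (mem_nhdsWithin_of_mem_nhds (Ioi_mem_nhds hta)) self_mem_nhdsWithin)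
    obtain ⟨d, ⟨htd, hda⟩, hdD⟩ := hDdense.inter_open_nonempty ((↑) ⁻¹' Set.Ioo t a)
      (isOpen_Ioo.preimage continuous_subtype_val) ⟨⟨s, hsA⟩, hts, hsa⟩
    exact ⟨d, Or.inl ⟨d, hdD, rfl⟩, htd, le_of_lt hda⟩

end AEMonotone

section LikelihoodRatio

variable {P Q : Measure 𝒳} {S : Set 𝒳} {K : Set ℝ} {c : ℝ}

lemma measurable_LR (P Q : Measure 𝒳) : Measurable (LR P Q) :=
  (Measure.measurable_rnDeriv Q P).ennreal_toReal

lemma nullSingletonClass_map_LR (hcont : AtomlessLR P Q) :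
    NullSingletonClass (P.map (LR P Q)) where
  measure_singleton c := by
    rw [Measure.map_apply (measurable_LR P Q) (measurableSet_singleton c)]
    exact hcont c

lemma absolutelyContinuous_of_atomlessLR (hcont : AtomlessLR P Q) : P ≪ Q := by
  have hpos : ∀ᵐ x ∂P, Q.rnDeriv P x ≠ 0 :=
    measure_mono_null (fun x hx ↦ by simp_all [LR]) (hcont 0)
  exact (withDensity_absolutelyContinuous' (Measure.measurable_rnDeriv Q P).aemeasurable hpos).trans
    (Measure.absolutelyContinuous_of_le (Measure.withDensity_rnDeriv_le Q P))

lemma ofReal_mul_measure_le_of_forall_le_LR (hS : MeasurableSet S) (h : ∀ x ∈ S, c ≤ LR P Q x) :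
    ENNReal.ofReal c * P S ≤ Q S :=
  calc ENNReal.ofReal c * P S = ∫⁻ _ in S, ENNReal.ofReal c ∂P := (setLIntegral_const S _).symm
    _ ≤ ∫⁻ x in S, Q.rnDeriv P x ∂P :=
      setLIntegral_mono' hS fun x hx ↦ ENNReal.ofReal_le_of_le_toReal (h x hx)
    _ ≤ Q S := Measure.setLIntegral_rnDeriv_le S

variable [IsFiniteMeasure P] [IsFiniteMeasure Q]

lemma measure_lt_ofReal_mul_of_forall_LR_le (hQP : Q ≪ P) (hcont : AtomlessLR P Q)
    (hS : MeasurableSet S) (hPS : P S ≠ 0) (h : ∀ x ∈ S, LR P Q x ≤ c) :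
    Q S < ENNReal.ofReal c * P S := by
  rw [← Measure.setLIntegral_rnDeriv hQP, ← setLIntegral_const]
  refine setLIntegral_strict_mono hS hPS measurable_const ?_ ?_
  · rw [Measure.setLIntegral_rnDeriv hQP]
    exact measure_ne_top _ _
  · have hne : ∀ᵐ x ∂P, LR P Q x ≠ c := by simpa [ae_iff] using hcont c
    filter_upwards [Measure.rnDeriv_lt_top Q P, hne] with x hfin hxc hxS
    exact (ENNReal.lt_ofReal_iff_toReal_lt hfin.ne).2 ((h x hxS).lt_of_ne hxc)

lemma ae_eq_preimage_LR_of_isUpperSet (hQP : Q ≪ P) (hcont : AtomlessLR P Q)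
    (hS : MeasurableSet S) (hK : IsUpperSet K) (hP : P S = P (LR P Q ⁻¹' K))
    (hQ : Q (LR P Q ⁻¹' K) ≤ Q S) : S =ᵐ[P] LR P Q ⁻¹' K := by
  set T := LR P Q ⁻¹' K
  have hT : MeasurableSet T := measurable_LR P Q hK.ordConnected.measurableSet
  have hdiff : P (S \ T) = P (T \ S) :=
    measure_sdiff_symm hS.nullMeasurableSet hT.nullMeasurableSet hP (measure_ne_top _ _)
  suffices h0 : P (S \ T) = 0 from
    (ae_le_set.2 h0).antisymm (ae_le_set.2 (hdiff ▸ h0))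
  by_contra h0
  obtain ⟨x, -, hxT⟩ := nonempty_of_measure_ne_zero h0
  obtain ⟨y, hyT, -⟩ := nonempty_of_measure_ne_zero (hdiff ▸ h0)
  obtain ⟨c, hc_ub, hc_lb⟩ : (upperBounds Kᶜ ∩ lowerBounds K).Nonempty :=
    exists_between_of_forall_le ⟨_, hxT⟩ ⟨_, hyT⟩ fun a ha b hb ↦
      (le_total a b).resolve_right fun hba ↦ ha (hK hba hb)
  have hlt : Q (S \ T) < Q (T \ S) :=
    calc Q (S \ T) < ENNReal.ofReal c * P (S \ T) :=
          measure_lt_ofReal_mul_of_forall_LR_le hQP hcont (hS.diff hT) h0 fun _ hz ↦ hc_ub hz.2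
      _ = ENNReal.ofReal c * P (T \ S) := by rw [hdiff]
      _ ≤ Q (T \ S) :=
          ofReal_mul_measure_le_of_forall_le_LR (hT.diff hS) fun _ hz ↦ hc_lb hz.1
  refine hQ.not_gt ?_
  rw [← measure_sdiff_add_inter S hT, ← measure_sdiff_add_inter T hS, Set.inter_comm T S]
  exact ENNReal.add_lt_add_right (measure_ne_top _ _) hlt

lemma measure_le_measure_preimage_LR_of_isUpperSet (hQP : Q ≪ P) (hcont : AtomlessLR P Q)
    (hS : MeasurableSet S) (hK : IsUpperSet K) (hP : P S = P (LR P Q ⁻¹' K)) :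
    Q S ≤ Q (LR P Q ⁻¹' K) := by
  by_contra! hlt
  have heq := ae_eq_preimage_LR_of_isUpperSet hQP hcont hS hK hP hlt.le
  exact hlt.ne' (measure_congr (hQP.ae_le heq))

end LikelihoodRatio

section LikelihoodRatioTest

variable {P Q : Measure 𝒳} {ℬ : Set ℝ} {ℓ : ℝ → ℝ} {α : ℝ → ℝ≥0∞}

/-- The Neyman–Pearson rejection region of size `g`: the points whose likelihood ratio lies in the
upper tail of mass `g` of its law under `P`. -/
def lrRegion (P Q : Measure 𝒳) (g : ℝ≥0∞) : Set 𝒳 :=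
  LR P Q ⁻¹' upperTail (P.map (LR P Q)) g

lemma lrRegion_mono (P Q : Measure 𝒳) : Monotone (lrRegion P Q) :=
  fun _ _ hg ↦ Set.preimage_mono (upperTail_mono _ hg)

lemma measure_lrRegion [IsFiniteMeasure P] (hcont : AtomlessLR P Q) {g : ℝ≥0∞}
    (hg : g ≤ P Set.univ) : P (lrRegion P Q g) = g := by
  have := nullSingletonClass_map_LR hcont
  have hmeas : MeasurableSet (upperTail (P.map (LR P Q)) g) :=
    (isUpperSet_upperTail _ g).ordConnected.measurableSet
  rw [lrRegion, ← Measure.map_apply (measurable_LR P Q) hmeas]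
  refine measure_upperTail (hg.trans_eq ?_)
  rw [Measure.map_apply (measurable_LR P Q) MeasurableSet.univ, Set.preimage_univ]

/-- The likelihood ratio test family with size `α b` in scenario `b`. -/
noncomputable def lrTest (P Q : Measure 𝒳) (α : ℝ → ℝ≥0∞) (x : 𝒳) (b : ℝ) : ℝ :=
  (lrRegion P Q (α b)).indicator 1 x

lemma lrTest_eq_zero_or_one (P Q : Measure 𝒳) (α : ℝ → ℝ≥0∞) (x : 𝒳) (b : ℝ) :
    lrTest P Q α x b = 0 ∨ lrTest P Q α x b = 1 :=
  Set.indicator_eq_zero_or_self _ _ _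

lemma measurable_uncurry_lrTest (hα : Measurable α) :
    Measurable fun p : 𝒳 × ℝ ↦ lrTest P Q α p.1 p.2 := by
  have hmeas : MeasurableSet {p : 𝒳 × ℝ | p.1 ∈ lrRegion P Q (α p.2)} :=
    measurableSet_le ((measurable_measure_Ioi _).comp ((measurable_LR P Q).comp measurable_fst))
      (hα.comp measurable_snd)
  exact measurable_one.indicator hmeas

lemma measurable_Esup_lrTest (P Q : Measure 𝒳) (ℬ : Set ℝ) (ℓ : ℝ → ℝ) (α : ℝ → ℝ≥0∞) :
    Measurable (Esup ℬ ℓ (lrTest P Q α)) := by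
  let E : ℝ → ℝ≥0∞ := fun c ↦
    ⨆ b : ℬ, (upperTail (P.map (LR P Q)) (α b)).indicator (fun _ ↦ ENNReal.ofReal (ℓ b)) c
  have hE : Monotone E := fun c d hcd ↦ iSup_mono fun b ↦ by
    by_cases hc : c ∈ upperTail (P.map (LR P Q)) (α b)
    · simp [hc, isUpperSet_upperTail _ _ hcd hc]
    · simp [hc]
  have hEsup : Esup ℬ ℓ (lrTest P Q α) = E ∘ LR P Q := by
    ext x
    refine iSup_congr fun b ↦ ?_
    by_cases hx : LR P Q x ∈ upperTail (P.map (LR P Q)) (α b) <;> simp [lrTest, lrRegion, hx]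
  exact hEsup ▸ hE.measurable.comp (measurable_LR P Q)

lemma isBinaryTestFamily_lrTest (P Q : Measure 𝒳) (ℬ : Set ℝ) (ℓ : ℝ → ℝ) (hα : Measurable α) :
    IsBinaryTestFamily ℬ ℓ (lrTest P Q α) := by
  refine ⟨⟨measurable_uncurry_lrTest hα, fun x b _ ↦ ?_, measurable_Esup_lrTest P Q ℬ ℓ α⟩,
    fun x b _ ↦ lrTest_eq_zero_or_one P Q α x b⟩
  rcases lrTest_eq_zero_or_one P Q α x b with h | h <;> simp [h]

end LikelihoodRatioTest

section BinaryTestFamily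

variable {P Q : Measure 𝒳} {ℬ : Set ℝ} {ℓ m : ℝ → ℝ} {φ ψ : 𝒳 → ℝ → ℝ} {b : ℝ}

/-- The event that `δ` rejects the null in scenario `b`. -/
def rejectionRegion (δ : 𝒳 → ℝ → ℝ) (b : ℝ) : Set 𝒳 := {x | δ x b = 1}

lemma rejectionRegion_lrTest (P Q : Measure 𝒳) (α : ℝ → ℝ≥0∞) (b : ℝ) :
    rejectionRegion (lrTest P Q α) b = lrRegion P Q (α b) := by
  ext x
  exact Set.indicator_eq_one_iff_mem ℝ

lemma measurableSet_rejectionRegion (hφ : IsBinaryTestFamily ℬ ℓ φ) (b : ℝ) :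
    MeasurableSet (rejectionRegion φ b) :=
  hφ.1.1.comp measurable_prodMk_right (measurableSet_singleton 1)

lemma lt_Esup_iff (hφ : IsBinaryTestFamily ℬ ℓ φ) {x : 𝒳} {t : ℝ≥0∞} :
    t < Esup ℬ ℓ φ x ↔ ∃ b ∈ ℬ, x ∈ rejectionRegion φ b ∧ t < ENNReal.ofReal (ℓ b) := by
  simp only [Esup, lt_iSup_iff, Subtype.exists, exists_prop, rejectionRegion, Set.mem_ofPred_eq]
  refine exists_congr fun b ↦ and_congr_right fun hb ↦ ?_
  rcases hφ.2 x b hb with h | h <;> simp [h]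

/-- The event that the e-value of `δ` reaches the type-I loss of scenario `b`. Its probability is
the size of the test that replaces `δ` in that scenario, see `lrRearrangement`. -/
def exceedanceRegion (ℬ : Set ℝ) (ℓ : ℝ → ℝ) (δ : 𝒳 → ℝ → ℝ) (b : ℝ) : Set 𝒳 :=
  {x | ENNReal.ofReal (ℓ b) ≤ Esup ℬ ℓ δ x}

lemma rejectionRegion_subset_exceedanceRegion {Ω : Type*} (ℓ : ℝ → ℝ) (δ : Ω → ℝ → ℝ)
    (hb : b ∈ ℬ) : rejectionRegion δ b ⊆ exceedanceRegion ℬ ℓ δ b := fun x (hx : δ x b = 1) ↦ by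
  simpa [exceedanceRegion, Esup, hx] using
    le_iSup (fun b : ℬ ↦ ENNReal.ofReal (ℓ b * δ x b)) ⟨b, hb⟩

lemma measurableSet_exceedanceRegion (hφ : IsBinaryTestFamily ℬ ℓ φ) (b : ℝ) :
    MeasurableSet (exceedanceRegion ℬ ℓ φ b) :=
  measurableSet_le measurable_const hφ.1.2.2

lemma typeIIRisk_const [IsFiniteMeasure Q] (m : ℝ → ℝ) (hφ : IsBinaryTestFamily ℬ ℓ φ)
    (hb : b ∈ ℬ) : typeIIRisk Q m φ (fun _ ↦ b) =
      ENNReal.ofReal (m b) * (Q Set.univ - Q (rejectionRegion φ b)) := by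
  have hmeas := measurableSet_rejectionRegion hφ b
  rw [← measure_compl hmeas (measure_ne_top _ _), ← lintegral_indicator_const hmeas.compl]
  refine lintegral_congr fun x ↦ ?_
  rcases hφ.2 x b hb with h | h <;> simp [rejectionRegion, h, Set.indicator]

lemma typeIIRisk_const_le_iff [IsFiniteMeasure Q] (hm : 0 < m b) (hφ : IsBinaryTestFamily ℬ ℓ φ)
    (hψ : IsBinaryTestFamily ℬ ℓ ψ) (hb : b ∈ ℬ) :
    typeIIRisk Q m ψ (fun _ ↦ b) ≤ typeIIRisk Q m φ (fun _ ↦ b) ↔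
      Q (rejectionRegion φ b) ≤ Q (rejectionRegion ψ b) := by
  rw [typeIIRisk_const m hψ hb, typeIIRisk_const m hφ hb,
    ENNReal.mul_le_mul_iff_right (by simpa using hm) ENNReal.ofReal_ne_top,
    ENNReal.sub_le_sub_iff_left (measure_mono (Set.subset_univ _)) (measure_ne_top _ _)]

lemma measure_rejectionRegion_le_of_admissibleBinary [IsFiniteMeasure Q] (hm : ∀ b ∈ ℬ, 0 < m b)
    (hφ : IsBinaryTestFamily ℬ ℓ φ) (hadm : AdmissibleBinary P Q ℬ ℓ m (ConstAdv 𝒳 ℬ) φ)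
    (hψ : IsBinaryTestFamily ℬ ℓ ψ) (hsafe : RiskSafe P ℬ ℓ ψ)
    (hle : ∀ b ∈ ℬ, Q (rejectionRegion φ b) ≤ Q (rejectionRegion ψ b)) (hb : b ∈ ℬ) :
    Q (rejectionRegion ψ b) ≤ Q (rejectionRegion φ b) := by
  by_contra hlt
  refine hadm.2 ψ hψ ⟨hsafe, ?_, fun _ ↦ b, ⟨b, hb, rfl⟩, ?_⟩
  · rintro _ ⟨b', hb', rfl⟩
    exact (typeIIRisk_const_le_iff (hm b' hb') hφ hψ hb').2 (hle b' hb')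
  · exact not_le.1 fun h ↦ hlt ((typeIIRisk_const_le_iff (hm b hb) hψ hφ hb).1 h)

end BinaryTestFamily

section Rearrangement

variable {P Q : Measure 𝒳} {ℬ : Set ℝ} {ℓ m : ℝ → ℝ} {φ : 𝒳 → ℝ → ℝ} {b : ℝ}

/-- The monotone rearrangement of `φ` along the likelihood ratio: in each scenario `b`, the
Neyman–Pearson test whose size is the probability that the e-value of `φ` reaches `ℓ b`. -/
noncomputable def lrRearrangement (P Q : Measure 𝒳) (ℬ : Set ℝ) (ℓ : ℝ → ℝ) (φ : 𝒳 → ℝ → ℝ) :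
    𝒳 → ℝ → ℝ :=
  lrTest P Q fun b ↦ P (exceedanceRegion ℬ ℓ φ b)

lemma isBinaryTestFamily_lrRearrangement (P Q : Measure 𝒳) (ℬ : Set ℝ) (hℓ : Measurable ℓ)
    (φ : 𝒳 → ℝ → ℝ) : IsBinaryTestFamily ℬ ℓ (lrRearrangement P Q ℬ ℓ φ) := by
  have hanti : Antitone fun t ↦ P {x | t ≤ Esup ℬ ℓ φ x} :=
    fun _ _ hst ↦ measure_mono fun _ hx ↦ hst.trans hx
  exact isBinaryTestFamily_lrTest P Q ℬ ℓ (hanti.measurable.comp hℓ.ennreal_ofReal)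

variable [IsFiniteMeasure P]

lemma measure_rejectionRegion_lrRearrangement (hcont : AtomlessLR P Q) (ℬ : Set ℝ) (ℓ : ℝ → ℝ)
    (φ : 𝒳 → ℝ → ℝ) (b : ℝ) :
    P (rejectionRegion (lrRearrangement P Q ℬ ℓ φ) b) = P (exceedanceRegion ℬ ℓ φ b) := by
  rw [lrRearrangement, rejectionRegion_lrTest]
  exact measure_lrRegion hcont (measure_mono (Set.subset_univ _))

lemma measure_lt_Esup_lrRearrangement_le (hcont : AtomlessLR P Q) (hℓ : Measurable ℓ)
    (t : ℝ≥0∞) : P {x | t < Esup ℬ ℓ (lrRearrangement P Q ℬ ℓ φ) x} ≤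
      P {x | t < Esup ℬ ℓ φ x} := by
  rw [← measure_lrRegion hcont (measure_mono (Set.subset_univ {x | t < Esup ℬ ℓ φ x}))]
  refine measure_mono fun x hx ↦ ?_
  obtain ⟨b, -, hxb, htb⟩ := (lt_Esup_iff (isBinaryTestFamily_lrRearrangement P Q ℬ hℓ φ)).1 hx
  rw [lrRearrangement, rejectionRegion_lrTest] at hxb
  exact lrRegion_mono P Q (measure_mono fun y hy ↦ htb.trans_le hy) hxb

lemma typeIRisk_lrRearrangement_le (hcont : AtomlessLR P Q) (hℓ : Measurable ℓ)
    (hφ : IsBinaryTestFamily ℬ ℓ φ) :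
    typeIRisk P ℬ ℓ (lrRearrangement P Q ℬ ℓ φ) ≤ typeIRisk P ℬ ℓ φ :=
  lintegral_le_of_forall_measure_lt_le (isBinaryTestFamily_lrRearrangement P Q ℬ hℓ φ).1.2.2
    hφ.1.2.2 (measure_lt_Esup_lrRearrangement_le hcont hℓ)

variable [IsFiniteMeasure Q]

lemma measure_exceedanceRegion_le_lrRearrangement (hQP : Q ≪ P) (hcont : AtomlessLR P Q)
    (hφ : IsBinaryTestFamily ℬ ℓ φ) (b : ℝ) :
    Q (exceedanceRegion ℬ ℓ φ b) ≤ Q (rejectionRegion (lrRearrangement P Q ℬ ℓ φ) b) := by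
  have hP := measure_rejectionRegion_lrRearrangement hcont ℬ ℓ φ b
  rw [lrRearrangement, rejectionRegion_lrTest] at hP ⊢
  exact measure_le_measure_preimage_LR_of_isUpperSet hQP hcont
    (measurableSet_exceedanceRegion hφ b) (isUpperSet_upperTail _ _) hP.symm

lemma measure_rejectionRegion_lrRearrangement_le (hQP : Q ≪ P) (hcont : AtomlessLR P Q)
    (hℓ : Measurable ℓ) (hm : ∀ b ∈ ℬ, 0 < m b) (hφ : IsBinaryTestFamily ℬ ℓ φ)
    (hadm : AdmissibleBinary P Q ℬ ℓ m (ConstAdv 𝒳 ℬ) φ) (hb : b ∈ ℬ) :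
    Q (rejectionRegion (lrRearrangement P Q ℬ ℓ φ) b) ≤ Q (rejectionRegion φ b) :=
  measure_rejectionRegion_le_of_admissibleBinary hm hφ hadm
    (isBinaryTestFamily_lrRearrangement P Q ℬ hℓ φ)
    ((typeIRisk_lrRearrangement_le hcont hℓ hφ).trans hadm.1)
    (fun b hb ↦ (measure_mono (rejectionRegion_subset_exceedanceRegion ℓ φ hb)).trans
      (measure_exceedanceRegion_le_lrRearrangement hQP hcont hφ b)) hb

lemma exceedanceRegion_ae_eq_lrRegion (hQP : Q ≪ P) (hcont : AtomlessLR P Q) (hℓ : Measurable ℓ)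
    (hm : ∀ b ∈ ℬ, 0 < m b) (hφ : IsBinaryTestFamily ℬ ℓ φ)
    (hadm : AdmissibleBinary P Q ℬ ℓ m (ConstAdv 𝒳 ℬ) φ) (hb : b ∈ ℬ) :
    exceedanceRegion ℬ ℓ φ b =ᵐ[P] lrRegion P Q (P (exceedanceRegion ℬ ℓ φ b)) := by
  have hP := measure_rejectionRegion_lrRearrangement hcont ℬ ℓ φ b
  have hQ := (measure_rejectionRegion_lrRearrangement_le hQP hcont hℓ hm hφ hadm hb).trans
    (measure_mono (rejectionRegion_subset_exceedanceRegion ℓ φ hb))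
  rw [lrRearrangement, rejectionRegion_lrTest] at hP hQ
  exact ae_eq_preimage_LR_of_isUpperSet hQP hcont (measurableSet_exceedanceRegion hφ b)
    (isUpperSet_upperTail _ _) hP.symm hQ

lemma rejectionRegion_ae_eq_exceedanceRegion (hQP : Q ≪ P) (hcont : AtomlessLR P Q)
    (hℓ : Measurable ℓ) (hm : ∀ b ∈ ℬ, 0 < m b) (hφ : IsBinaryTestFamily ℬ ℓ φ)
    (hadm : AdmissibleBinary P Q ℬ ℓ m (ConstAdv 𝒳 ℬ) φ) (hb : b ∈ ℬ) :
    rejectionRegion φ b =ᵐ[P] exceedanceRegion ℬ ℓ φ b := by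
  have hQ : Q (exceedanceRegion ℬ ℓ φ b) ≤ Q (rejectionRegion φ b) :=
    (measure_exceedanceRegion_le_lrRearrangement hQP hcont hφ b).trans
      (measure_rejectionRegion_lrRearrangement_le hQP hcont hℓ hm hφ hadm hb)
  exact (absolutelyContinuous_of_atomlessLR hcont).ae_le <|
    ae_eq_of_subset_of_measure_ge (rejectionRegion_subset_exceedanceRegion ℓ φ hb) hQ
      (measurableSet_rejectionRegion hφ b).nullMeasurableSet (measure_ne_top _ _)

theorem aemonotoneAlong_LR_Esup (hQP : Q ≪ P) (hcont : AtomlessLR P Q) (hℓ : Measurable ℓ)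
    (hm : ∀ b ∈ ℬ, 0 < m b) (hφ : IsBinaryTestFamily ℬ ℓ φ)
    (hadm : AdmissibleBinary P Q ℬ ℓ m (ConstAdv 𝒳 ℬ) φ) :
    AEMonotoneAlong P (LR P Q) (Esup ℬ ℓ φ) := by
  obtain ⟨D, hDsub, hD, hDapprox⟩ :=
    exists_countable_subset_forall_lt_exists_mem_Ioc ((fun b ↦ ENNReal.ofReal (ℓ b)) '' ℬ)
  refine aemonotoneAlong_of_countable hD (fun x y hyx ↦ ?_) fun a ha ↦ ?_
  · obtain ⟨b, hb, hxb, hyb⟩ := (lt_Esup_iff hφ).1 hyx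
    obtain ⟨d, hd, hyd, hdb⟩ := hDapprox _ ⟨b, hb, rfl⟩ _ hyb
    exact ⟨d, hd, hyd, hdb.trans (rejectionRegion_subset_exceedanceRegion ℓ φ hb hxb)⟩
  · obtain ⟨b, hb, rfl⟩ := hDsub ha
    exact ⟨_, isUpperSet_upperTail _ _,
      exceedanceRegion_ae_eq_lrRegion hQP hcont hℓ hm hφ hadm hb⟩

theorem aemonotoneAlong_LR_apply (hQP : Q ≪ P) (hcont : AtomlessLR P Q) (hℓ : Measurable ℓ)
    (hm : ∀ b ∈ ℬ, 0 < m b) (hφ : IsBinaryTestFamily ℬ ℓ φ)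
    (hadm : AdmissibleBinary P Q ℬ ℓ m (ConstAdv 𝒳 ℬ) φ) (hb : b ∈ ℬ) :
    AEMonotoneAlong P (LR P Q) fun x ↦ φ x b := by
  have hone : {x | 1 ≤ φ x b} = rejectionRegion φ b :=
    Set.ext fun x ↦ (hφ.1.2.1 x b hb).2.ge_iff_eq
  refine aemonotoneAlong_of_countable (Set.countable_singleton 1) (fun x y hyx ↦ ?_) ?_
  · have hx : φ x b = 1 := (hφ.2 x b hb).resolve_left
      ((hφ.1.2.1 y b hb).1.trans_lt hyx).ne'
    exact ⟨1, rfl, hyx.trans_eq hx, hx.ge⟩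
  · rintro _ rfl
    exact ⟨_, isUpperSet_upperTail _ _, hone ▸
      (rejectionRegion_ae_eq_exceedanceRegion hQP hcont hℓ hm hφ hadm hb).trans
        (exceedanceRegion_ae_eq_lrRegion hQP hcont hℓ hm hφ hadm hb)⟩

end Rearrangement

theorem stmt16_general (P Q : Measure 𝒳) [IsFiniteMeasure P] [IsFiniteMeasure Q] (hQP : Q ≪ P)
    (ℬ : Set ℝ) (ℓ : ℝ → ℝ) (hℓ : Measurable ℓ) (m : ℝ → ℝ) (hm : ∀ b ∈ ℬ, 0 < m b)
    (hcont : AtomlessLR P Q) (φ : 𝒳 → ℝ → ℝ) (hφ : IsBinaryTestFamily ℬ ℓ φ)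
    (hadm : AdmissibleBinary P Q ℬ ℓ m (ConstAdv 𝒳 ℬ) φ) :
    AEMonotoneAlong P (LR P Q) (Esup ℬ ℓ φ) ∧
      ∀ b ∈ ℬ, AEMonotoneAlong P (LR P Q) fun x ↦ φ x b :=
  ⟨aemonotoneAlong_LR_Esup hQP hcont hℓ hm hφ hadm,
    fun _ hb ↦ aemonotoneAlong_LR_apply hQP hcont hℓ hm hφ hadm hb⟩

/-- when the likelihood ratio is atomless under `P`, the e-value of any
`𝐂`-admissible binary test family is an increasing function of the likelihood ratio
`P`-a.s.; consequently, for each fixed `b ∈ ℬ`, `φ(·,b)` is an increasing function of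
the likelihood ratio `P`-a.s. -/
theorem stmt16
    [StandardBorelSpace 𝒳]
    (P Q : Measure 𝒳) [IsProbabilityMeasure P] [IsProbabilityMeasure Q]
    (hPQ : P ≪ Q) (hQP : Q ≪ P)
    (ℬ : Set ℝ) (hℬne : ℬ.Nonempty)
    (ℓ : ℝ → ℝ) (hℓmeas : Measurable ℓ) (hℓpos : ∀ b ∈ ℬ, 0 < ℓ b)
    (hℓmono : ∀ b₁ ∈ ℬ, ∀ b₂ ∈ ℬ, b₁ ≤ b₂ → ℓ b₁ ≤ ℓ b₂)
    (hℓgt1 : ∃ b ∈ ℬ, 1 < ℓ b)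
    (m : ℝ → ℝ) (hm : ∀ b ∈ ℬ, 0 < m b)
    (hcont : AtomlessLR P Q)
    (φ : 𝒳 → ℝ → ℝ) (hφ : IsBinaryTestFamily ℬ ℓ φ)
    (hadm : AdmissibleBinary P Q ℬ ℓ m (ConstAdv 𝒳 ℬ) φ) :
    (∃ N : Set 𝒳, P N = 0 ∧
      ∀ x ∉ N, ∀ y ∉ N, LR P Q x ≤ LR P Q y → Esup ℬ ℓ φ x ≤ Esup ℬ ℓ φ y) ∧
    (∀ b ∈ ℬ, ∃ N : Set 𝒳, P N = 0 ∧
      ∀ x ∉ N, ∀ y ∉ N, LR P Q x ≤ LR P Q y → φ x b ≤ φ y b) := by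
  exact stmt16_general P Q hQP ℬ ℓ hℓmeas m hm hcont φ hφ hadm

end PostHocTesting
end
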